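/- arXiv:1401.0976 — 2 statements merged into one kernel-verified Lean document; each statement's English description precedes it below -/
import Mathlib

section
/- Jacobian criterion for algebraic independence: Let F be a field and let f_1,…,f_m ∈ F[x_1,…,x_n] be polynomials each of (total) degree at most d, with trdeg_F{f_1,…,f_m} ≤ r. Assume char(F) = 0 or char(F) > d^r. Then trdeg_F{f_1,…,f_m} equals the rank, over the rational function field F(x_1,…,x_n), of the m×n Jacobian matrix J_x(f) whose (i,j)-entry is the partial derivative ∂f_i/∂x_j. -/
open scoped Classical

/-- The transcendence degree of a finite set `s` of elements of an `F`-algebra: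
the largest cardinality of a subset of `s` that is algebraically independent
over `F`. -/
noncomputable def fintrdeg (F : Type*) [CommRing F] {A : Type*} [CommRing A]
    [Algebra F A] (s : Finset A) : ℕ :=
  sSup {m | ∃ t : Finset A, t ⊆ s ∧ t.card = m ∧
    AlgebraicIndependent F (fun x : (t : Set A) => (x : A))}

/-!
Extend a transcendence basis of the `f k` by variables to a transcendence basis `y` of `F[x]`, so
that `∏ deg (y i) ≤ d ^ r`.  Comparing the number of monomials in `y` with the number of monomials
in `x` of bounded degree gives a Bézout-type bound: a family of polynomials that are algebraic over
`F[y i | i ∈ U]` and linearly independent over it has at most `∏ deg (y i)` members.  Hence every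
polynomial algebraic over `F[y i | i ∈ U]` satisfies a relation whose degree is smaller than the
characteristic, and a derivation killing the `y i` with `i ∈ U` kills it as well.

Vectors `v` correspond to derivations `D` with `D xⱼ = vⱼ`, and `v` lies in the kernel of the
Jacobian matrix of a family exactly when `D` kills the family.  With `U` everything, the Jacobian
matrix of `y` is invertible; with `y i` (`i ∈ U`) the basis of the `f k`, the Jacobian matrix of `f`
has the same kernel as the rows of that matrix indexed by `U`.
-/

open MvPolynomial

section Counting

theorem exists_mul_lt_mul_of_le_succ_pow {h : ℕ → ℕ} {n : ℕ} (hpoly : ∀ N, h N ≤ (N + 1) ^ n)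
    (h0 : 0 < h 0) (c : ℕ) {q s : ℕ} (hqs : q < s) : ∃ N, q * h (N + c) < s * h N := by
  by_contra! hgrowth
  have hs : (0 : ℝ) < s := by exact_mod_cast hqs.pos
  have geometric (k : ℕ) : s ^ k ≤ q ^ k * h (k * c) := by
    induction k with
    | zero => simpa using Nat.one_le_iff_ne_zero.2 h0.ne'
    | succ k ih =>
      calc s ^ (k + 1) = s * s ^ k := pow_succ' s k
        _ ≤ s * (q ^ k * h (k * c)) := by gcongr
        _ = q ^ k * (s * h (k * c)) := by ring
        _ ≤ q ^ k * (q * h (k * c + c)) := Nat.mul_le_mul_left _ (hgrowth _)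
        _ = q ^ (k + 1) * h ((k + 1) * c) := by rw [add_one_mul]; ring
  have polynomial (k : ℕ) (hk : 1 ≤ k) : h (k * c) ≤ (c + 1) ^ n * k ^ n :=
    calc h (k * c) ≤ (k * c + 1) ^ n := hpoly _
      _ ≤ ((c + 1) * k) ^ n := by gcongr; linarith
      _ = (c + 1) ^ n * k ^ n := mul_pow ..
  have hratio : |(q / s : ℝ)| < 1 := by
    rw [abs_of_nonneg (by positivity), div_lt_one hs]
    exact_mod_cast hqs
  have hlim : Filter.Tendsto (fun k : ℕ => (c + 1 : ℝ) ^ n * (k ^ n * (q / s : ℝ) ^ k))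
      Filter.atTop (nhds 0) := by
    simpa using (tendsto_pow_const_mul_const_pow_of_abs_lt_one n hratio).const_mul _
  obtain ⟨k, hlt, hk⟩ :=
    ((hlim.eventually_lt_const one_pos).and (Filter.eventually_ge_atTop 1)).exists
  have hle : (s : ℝ) ^ k ≤ q ^ k * ((c + 1) ^ n * k ^ n) := by
    exact_mod_cast (geometric k).trans (Nat.mul_le_mul_left _ (polynomial k hk))
  rw [div_pow, ← mul_assoc, ← mul_div_assoc, div_lt_one (by positivity)] at hlt
  linarith

variable {σ : Type*} [Fintype σ]

theorem card_degree_le_le_succ_pow (N : ℕ) :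
    Nat.card {γ : σ →₀ ℕ // γ.degree ≤ N} ≤ (N + 1) ^ Fintype.card σ := by
  let toFun (γ : {γ : σ →₀ ℕ // γ.degree ≤ N}) (i : σ) : Fin (N + 1) :=
    ⟨γ.1 i, Nat.lt_succ_of_le ((Finsupp.le_degree i γ.1).trans γ.2)⟩
  have hinj : Function.Injective toFun := fun γ δ h => by
    ext i
    exact congrArg Fin.val (congrFun h i)
  simpa using Nat.card_le_card_of_injective toFun hinj

-- Division with remainder, `γ i = w i * (γ i / w i) + γ i % w i`, determines `γ`.
theorem card_degree_le_le_prod_mul_card_weight_le {w : σ → ℕ} (hw : ∀ i, w i ≠ 0) (N : ℕ) :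
    Nat.card {γ : σ →₀ ℕ // γ.degree ≤ N} ≤
      (∏ i, w i) * Nat.card {γ : σ →₀ ℕ // Finsupp.weight w γ ≤ N} := by
  have : Finite {γ : σ →₀ ℕ // Finsupp.weight w γ ≤ N} := Finsupp.finite_of_nat_weight_le w hw N
  have hquot (γ : σ →₀ ℕ) (hγ : γ.degree ≤ N) :
      Finsupp.weight w (Finsupp.equivFunOnFinite.symm fun i => γ i / w i) ≤ N := by
    rw [Finsupp.degree_eq_sum] at hγ
    rw [Finsupp.weight_eq_sum]
    exact (Finset.sum_le_sum fun i _ => Nat.div_mul_le_self (γ i) (w i)).trans hγ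
  let divMod (γ : {γ : σ →₀ ℕ // γ.degree ≤ N}) :
      (∀ i, Fin (w i)) × {γ : σ →₀ ℕ // Finsupp.weight w γ ≤ N} :=
    (fun i => ⟨γ.1 i % w i, Nat.mod_lt _ (Nat.pos_of_ne_zero (hw i))⟩, ⟨_, hquot γ.1 γ.2⟩)
  have hinj : Function.Injective divMod := fun γ δ h => by
    ext i
    have hmod : γ.1 i % w i = δ.1 i % w i := congrArg (fun p => (p.1 i).val) h
    have hdiv : γ.1 i / w i = δ.1 i / w i := congrArg (fun p => p.2.1 i) h
    rw [← Nat.div_add_mod (γ.1 i) (w i), hdiv, hmod, Nat.div_add_mod]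
  simpa [Nat.card_pi] using Nat.card_le_card_of_injective divMod hinj

end Counting

section DegreeBound

variable {F σ κ : Type*} [Field F]

theorem finrank_restrictTotalDegree {R : Type*} [CommRing R] [Nontrivial R] (N : ℕ) :
    Module.finrank R (restrictTotalDegree σ R N) = Nat.card {γ : σ →₀ ℕ // γ.degree ≤ N} :=
  Module.finrank_eq_nat_card_basis (basisRestrictSupport R {γ : σ →₀ ℕ | γ.degree ≤ N})

theorem totalDegree_aeval_monomial_le {R τ : Type*} [CommSemiring R]
    (y : σ → MvPolynomial τ R) (γ : σ →₀ ℕ) (a : R) :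
    (aeval y (monomial γ a)).totalDegree ≤ Finsupp.weight (fun i => (y i).totalDegree) γ := by
  rw [aeval_monomial, algebraMap_eq, Finsupp.weight_apply]
  calc _ ≤ _ := totalDegree_mul _ _
    _ = (∏ i ∈ γ.support, y i ^ γ i).totalDegree := by rw [totalDegree_C, zero_add]; rfl
    _ ≤ ∑ i ∈ γ.support, (y i ^ γ i).totalDegree := totalDegree_finsetProd _ _
    _ ≤ ∑ i ∈ γ.support, γ i • (y i).totalDegree :=
      Finset.sum_le_sum fun i _ => totalDegree_pow _ _

variable [Fintype κ]

theorem card_mul_card_weight_le_le_card_degree_le [Finite σ] {y : σ → MvPolynomial σ F}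
    {v : κ → MvPolynomial σ F}
    (hli : LinearIndependent F fun p : (σ →₀ ℕ) × κ => aeval y (monomial p.1 (1 : F)) * v p.2)
    (hy : ∀ i, (y i).totalDegree ≠ 0) {c : ℕ} (hv : ∀ k, (v k).totalDegree ≤ c) (N : ℕ) :
    Fintype.card κ * Nat.card {γ : σ →₀ ℕ // Finsupp.weight (fun i => (y i).totalDegree) γ ≤ N} ≤
      Nat.card {γ : σ →₀ ℕ // γ.degree ≤ N + c} := by
  let Γ := {γ : σ →₀ ℕ // Finsupp.weight (fun i => (y i).totalDegree) γ ≤ N}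
  have : Finite Γ := Finsupp.finite_of_nat_weight_le _ hy N
  have := Fintype.ofFinite Γ
  have : Finite {γ : σ →₀ ℕ | γ.degree ≤ N + c} := Finsupp.finite_of_degree_le (N + c)
  have : Module.Finite F (restrictTotalDegree σ F (N + c)) :=
    Module.Finite.of_basis (basisRestrictSupport F {γ : σ →₀ ℕ | γ.degree ≤ N + c})
  have hmem (p : Γ × κ) :
      aeval y (monomial p.1.1 (1 : F)) * v p.2 ∈ restrictTotalDegree σ F (N + c) := by
    rw [mem_restrictTotalDegree]
    exact (totalDegree_mul _ _).trans
      (add_le_add ((totalDegree_aeval_monomial_le y _ _).trans p.1.2) (hv p.2))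
  have hliΓ : LinearIndependent F fun p : Γ × κ =>
      (⟨_, hmem p⟩ : restrictTotalDegree σ F (N + c)) :=
    .of_comp (Submodule.subtype _) <|
      hli.comp (Prod.map Subtype.val id) (Subtype.val_injective.prodMap Function.injective_id)
  have hcard := hliΓ.fintype_card_le_finrank
  rwa [Fintype.card_prod, mul_comm, finrank_restrictTotalDegree,
    ← Nat.card_eq_fintype_card (α := Γ)] at hcard

theorem card_le_prod_totalDegree_of_linearIndependent_aeval_monomial_mul [Fintype σ]
    {y : σ → MvPolynomial σ F} {v : κ → MvPolynomial σ F}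
    (hli : LinearIndependent F fun p : (σ →₀ ℕ) × κ => aeval y (monomial p.1 (1 : F)) * v p.2)
    (hy : ∀ i, (y i).totalDegree ≠ 0) : Fintype.card κ ≤ ∏ i, (y i).totalDegree := by
  by_contra! hlt
  let c := Finset.univ.sup fun k => (v k).totalDegree
  have hpos : 0 < Nat.card {γ : σ →₀ ℕ // γ.degree ≤ 0} := by
    have : Finite {γ : σ →₀ ℕ // γ.degree ≤ 0} := Finsupp.finite_of_degree_le 0
    have : Nonempty {γ : σ →₀ ℕ // γ.degree ≤ 0} := ⟨0, by simp⟩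
    exact Nat.card_pos
  obtain ⟨N, hN⟩ :=
    exists_mul_lt_mul_of_le_succ_pow (card_degree_le_le_succ_pow (σ := σ)) hpos c hlt
  refine hN.not_ge ?_
  calc _ ≤ Fintype.card κ * ((∏ i, (y i).totalDegree) * Nat.card _) := by
        gcongr; exact card_degree_le_le_prod_mul_card_weight_le hy N
    _ = (∏ i, (y i).totalDegree) * (Fintype.card κ * Nat.card _) := by ring
    _ ≤ _ := by
        gcongr
        exact card_mul_card_weight_le_le_card_degree_le hli hy
          (fun k => Finset.le_sup (f := fun k => (v k).totalDegree) (Finset.mem_univ k)) N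

end DegreeBound

section AlgebraicIndependence

theorem linearIndependent_aeval_monomial {R A ι : Type*} [CommRing R] [CommRing A] [Algebra R A]
    {y : ι → A} (hy : AlgebraicIndependent R y) :
    LinearIndependent R fun γ : ι →₀ ℕ => aeval y (monomial γ (1 : R)) :=
  (basisMonomials ι R).linearIndependent.map' (aeval y).toLinearMap (LinearMap.ker_eq_bot.mpr hy)

theorem eq_of_subtypeDomain_eq_of_subtypeDomain_compl_eq {M ι : Type*} [Zero M] {γ δ : ι →₀ M}
    (U : Set ι) (hU : γ.subtypeDomain (· ∈ U) = δ.subtypeDomain (· ∈ U))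
    (hUc : γ.subtypeDomain (· ∈ Uᶜ) = δ.subtypeDomain (· ∈ Uᶜ)) : γ = δ := by
  ext i
  by_cases hi : i ∈ U
  · exact DFunLike.congr_fun hU ⟨i, hi⟩
  · exact DFunLike.congr_fun hUc ⟨i, hi⟩

theorem prod_subtypeDomain_pow_mul_prod_subtypeDomain_compl_pow {A ι : Type*} [CommMonoid A]
    (y : ι → A) (U : Set ι) (γ : ι →₀ ℕ) :
    ((γ.subtypeDomain (· ∈ U)).prod fun i k => y i ^ k) *
      ((γ.subtypeDomain (· ∈ Uᶜ)).prod fun i k => y i ^ k) = γ.prod fun i k => y i ^ k := by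
  have restrict (V : Set ι) : ((γ.subtypeDomain (· ∈ V)).prod fun i k => y i ^ k) =
      (γ.filter (· ∈ V)).prod fun i k => y i ^ k := by
    rw [Finsupp.prod, Finsupp.prod, Finsupp.support_subtypeDomain, Finsupp.support_filter,
      ← Finset.subtype_map, Finset.prod_map]
    simp +contextual
  rw [restrict, restrict]
  convert Finsupp.prod_filter_mul_prod_filter_not (· ∈ U) γ fun i k => y i ^ k

variable {F A ι κ : Type*} [CommRing F] [CommRing A] [IsDomain A] [Algebra F A]

-- The remaining `y i` are still independent over the algebraic closure of `F[y i | i ∈ U]`, so the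
-- monomials in them are linearly independent over a ring that contains the `v k`.
theorem linearIndependent_aeval_monomial_mul {y : ι → A} (hy : AlgebraicIndependent F y)
    (U : Set ι) {v : κ → A} (hv : ∀ k, IsAlgebraic (Algebra.adjoin F (y '' U)) (v k))
    (hli : LinearIndependent (Algebra.adjoin F (y '' U)) v) :
    LinearIndependent F fun p : (ι →₀ ℕ) × κ => aeval y (monomial p.1 (1 : F)) * v p.2 := by
  obtain ⟨hyU, hyUc⟩ := (AlgebraicIndependent.iff_adjoin_image U).mp hy
  set P := Algebra.adjoin F (y '' U)
  let M := Subalgebra.algebraicClosure P A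
  let yP (i : U) : P := ⟨y i, Algebra.subset_adjoin ⟨i, i.2, rfl⟩⟩
  have hyP : AlgebraicIndependent F yP := .of_comp P.val hyU
  let vM (k : κ) : M := ⟨v k, hv k⟩
  have hvM : LinearIndependent P vM := .of_comp M.val.toLinearMap hli
  have htower := linearIndependent_smul
    (linearIndependent_smul (linearIndependent_aeval_monomial hyP) hvM)
    (linearIndependent_aeval_monomial hyUc.subalgebraAlgebraicClosure)
  let split (p : (ι →₀ ℕ) × κ) : ((U →₀ ℕ) × κ) × (↥Uᶜ →₀ ℕ) :=
    ((p.1.subtypeDomain (· ∈ U), p.2), p.1.subtypeDomain (· ∈ Uᶜ))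
  have hsplit : Function.Injective split := by
    rintro ⟨γ, k⟩ ⟨δ, l⟩ h
    simp only [split, Prod.mk.injEq] at h
    obtain ⟨⟨hU, rfl⟩, hUc⟩ := h
    rw [eq_of_subtypeDomain_eq_of_subtypeDomain_compl_eq U hU hUc]
  have hfactor (p : (ι →₀ ℕ) × κ) : aeval y (monomial p.1 (1 : F)) * v p.2 =
      (aeval yP (monomial (split p).1.1 (1 : F)) • vM (split p).1.2) •
        aeval (fun i : ↥Uᶜ => y i) (monomial (split p).2 (1 : M)) := by
    have hP : (algebraMap P A) (aeval yP (monomial (split p).1.1 (1 : F))) =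
        (split p).1.1.prod fun i k => y i ^ k := by
      simp [aeval_monomial, map_finsuppProd, yP]
    rw [smul_assoc, Algebra.smul_def, hP, Subalgebra.smul_def, smul_eq_mul]
    simp only [aeval_monomial, map_one, one_mul,
      ← prod_subtypeDomain_pow_mul_prod_subtypeDomain_compl_pow y U p.1, split, vM]
    ring
  simp only [hfactor]
  exact htower.comp split hsplit

end AlgebraicIndependence

section BezoutBound

variable {F σ κ : Type*} [Field F]

theorem totalDegree_ne_zero_of_algebraicIndependent {R ι : Type*} [CommRing R] [Nontrivial R]
    {y : ι → MvPolynomial σ R} (hy : AlgebraicIndependent R y) (i : ι) :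
    (y i).totalDegree ≠ 0 := fun h => by
  refine hy.transcendental i ?_
  rw [totalDegree_eq_zero_iff_eq_C.mp h]
  exact isAlgebraic_algebraMap _

theorem card_le_prod_totalDegree_of_linearIndependent_adjoin [Fintype σ] [Fintype κ]
    {y : σ → MvPolynomial σ F} (hy : AlgebraicIndependent F y) (U : Set σ)
    {v : κ → MvPolynomial σ F} (hv : ∀ k, IsAlgebraic (Algebra.adjoin F (y '' U)) (v k))
    (hli : LinearIndependent (Algebra.adjoin F (y '' U)) v) :
    Fintype.card κ ≤ ∏ i, (y i).totalDegree :=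
  card_le_prod_totalDegree_of_linearIndependent_aeval_monomial_mul
    (linearIndependent_aeval_monomial_mul hy U hv hli)
    (totalDegree_ne_zero_of_algebraicIndependent hy)

theorem exists_natDegree_le_aeval_eq_zero {R A : Type*} [CommRing R] [CommRing A] [Algebra R A]
    {g : A} {n : ℕ} (hdep : ¬ LinearIndependent R fun a : Fin (n + 1) => g ^ (a : ℕ)) :
    ∃ q : Polynomial R, q ≠ 0 ∧ q.natDegree ≤ n ∧ Polynomial.aeval g q = 0 := by
  contrapose! hdep
  have hker : LinearMap.ker ((Polynomial.aeval g).toLinearMap ∘ₗ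
      (Polynomial.degreeLT R (n + 1)).subtype) = ⊥ := by
    refine LinearMap.ker_eq_bot'.mpr fun q hq => ?_
    by_contra hq0
    have hq0' : (q : Polynomial R) ≠ 0 := by simpa using hq0
    refine hdep q hq0' (Nat.lt_succ_iff.mp ?_) hq
    exact (Polynomial.natDegree_lt_iff_degree_lt hq0').mpr (Polynomial.mem_degreeLT.mp q.2)
  simpa [Function.comp_def] using
    (Polynomial.degreeLT.basis R (n + 1)).linearIndependent.map' _ hker

theorem exists_natDegree_le_prod_totalDegree_aeval_eq_zero [Fintype σ] {y : σ → MvPolynomial σ F}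
    (hy : AlgebraicIndependent F y) {U : Set σ} {g : MvPolynomial σ F}
    (hg : IsAlgebraic (Algebra.adjoin F (y '' U)) g) :
    ∃ q : Polynomial (Algebra.adjoin F (y '' U)),
      q ≠ 0 ∧ q.natDegree ≤ ∏ i, (y i).totalDegree ∧ Polynomial.aeval g q = 0 := by
  refine exists_natDegree_le_aeval_eq_zero fun hli => ?_
  have hcard := card_le_prod_totalDegree_of_linearIndependent_adjoin hy U
    (v := fun a : Fin _ => g ^ (a : ℕ)) (fun a => hg.pow a) hli
  simp at hcard

end BezoutBound

section Derivation

variable {F R M : Type*} [CommRing R] [AddCommGroup M] [Module R M]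

theorem derivation_aeval_of_forall_mem_eq_zero [CommRing F] [Algebra F R] [Module F M]
    {P : Subalgebra F R} {D : Derivation F R M} (hD : ∀ x ∈ P, D x = 0) (q : Polynomial P) (g : R) :
    D (Polynomial.aeval g q) = Polynomial.aeval g q.derivative • D g := by
  induction q using Polynomial.induction_on' with
  | add p q hp hq => simp only [map_add, hp, hq, add_smul]
  | monomial n a =>
    have ha : D (a : R) = 0 := hD a a.2
    simp [Polynomial.aeval_monomial, Polynomial.derivative_monomial, D.leibniz, ha,
      D.leibniz_pow, mul_smul, mul_assoc, Nat.cast_smul_eq_nsmul, Subalgebra.algebraMap_eq]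

theorem natCast_ne_zero_of_le_of_lt_ringChar [NonAssocSemiring F] {N k : ℕ}
    (hchar : ringChar F = 0 ∨ N < ringChar F) (hk : k ≠ 0) (hkN : k ≤ N) :
    (k : F) ≠ 0 := fun h => by
  have hdvd := (ringChar.spec F k).mp h
  rcases hchar with h0 | hN
  · exact hk (Nat.eq_zero_of_zero_dvd (h0 ▸ hdvd))
  · exact (Nat.le_of_dvd hk.pos hdvd).not_gt (hkN.trans_lt hN)

theorem derivative_ne_zero_of_natCast_natDegree_ne_zero {R : Type*} [Semiring R] [NoZeroDivisors R]
    {q : Polynomial R} (hq : (q.natDegree : R) ≠ 0) : q.derivative ≠ 0 := fun h => by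
  have hdeg : q.natDegree ≠ 0 := fun h0 => hq (by rw [h0, Nat.cast_zero])
  have hcoeff : q.leadingCoeff * q.natDegree = 0 := by
    have := congrArg (Polynomial.coeff · (q.natDegree - 1)) h
    simpa only [Polynomial.coeff_derivative, Polynomial.coeff_zero, ← Nat.cast_add_one,
      Nat.sub_add_cancel hdeg.pos, Polynomial.coeff_natDegree] using this
  rcases mul_eq_zero.mp hcoeff with h0 | h0
  · exact hdeg (by rw [Polynomial.leadingCoeff_eq_zero.mp h0, Polynomial.natDegree_zero])
  · exact hq h0

variable [Field F] [Algebra F R] [IsDomain R] [Module F M] [Module.IsTorsionFree R M]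

-- If `D g ≠ 0`, differentiating `q(g) = 0` shows that `g` is also a root of the derivative of `q`,
-- which is nonzero because `deg q` does not vanish in `F`.
theorem derivation_eq_zero_of_aeval_eq_zero {P : Subalgebra F R} {D : Derivation F R M}
    (hD : ∀ x ∈ P, D x = 0) {N : ℕ} (hchar : ringChar F = 0 ∨ N < ringChar F) {g : R}
    {q : Polynomial P} (hq : q ≠ 0) (hdeg : q.natDegree ≤ N) (hroot : Polynomial.aeval g q = 0) :
    D g = 0 := by
  induction hn : q.natDegree using Nat.strong_induction_on generalizing q with
  | _ n ih =>
    subst hn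
    have hn0 : q.natDegree ≠ 0 := fun h0 => by
      rw [Polynomial.eq_C_of_natDegree_eq_zero h0, Polynomial.aeval_C] at hroot
      have hcoeff : q.coeff 0 = 0 := Subtype.ext hroot
      exact hq (by rw [Polynomial.eq_C_of_natDegree_eq_zero h0, hcoeff, map_zero])
    have hcast : (q.natDegree : P) ≠ 0 := by
      rw [← map_natCast (algebraMap F P), map_ne_zero]
      exact natCast_ne_zero_of_le_of_lt_ringChar hchar hn0 hdeg
    have hderiv := derivation_aeval_of_forall_mem_eq_zero hD q g
    rw [hroot, map_zero, eq_comm, smul_eq_zero] at hderiv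
    rcases hderiv with hroot' | h
    · have hlt := Polynomial.natDegree_derivative_lt hn0
      exact ih _ hlt (derivative_ne_zero_of_natCast_natDegree_ne_zero hcast)
        (hlt.le.trans hdeg) hroot' rfl
    · exact h

theorem derivation_eq_zero_of_isAlgebraic_adjoin_image {F σ M : Type*} [Field F] [Fintype σ]
    [AddCommGroup M] [Module F M] [Module (MvPolynomial σ F) M]
    [Module.IsTorsionFree (MvPolynomial σ F) M] {y : σ → MvPolynomial σ F}
    (hy : AlgebraicIndependent F y) (hchar : ringChar F = 0 ∨ ∏ i, (y i).totalDegree < ringChar F)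
    {U : Set σ} {D : Derivation F (MvPolynomial σ F) M} (hD : ∀ i ∈ U, D (y i) = 0)
    {g : MvPolynomial σ F} (hg : IsAlgebraic (Algebra.adjoin F (y '' U)) g) : D g = 0 := by
  obtain ⟨q, hq, hdeg, hroot⟩ := exists_natDegree_le_prod_totalDegree_aeval_eq_zero hy hg
  have hDU : Set.EqOn D (0 : Derivation F (MvPolynomial σ F) M) (y '' U) := by
    rintro _ ⟨i, hi, rfl⟩
    exact hD i hi
  exact derivation_eq_zero_of_aeval_eq_zero (fun x hx => Derivation.eqOn_adjoin hDU hx) hchar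
    hq hdeg hroot

end Derivation

section TranscendenceDegree

theorem exists_algebraicIndepOn_card_eq_fintrdeg {F A : Type*} [CommRing F] [CommRing A]
    [Nontrivial A] [Algebra F A] [FaithfulSMul F A] (s : Finset A) :
    ∃ t ⊆ s, t.card = fintrdeg F s ∧ AlgebraicIndepOn F id (t : Set A) ∧
      ∀ a ∈ s, IsAlgebraic (Algebra.adjoin F (t : Set A)) a := by
  set cards := {m | ∃ t : Finset A, t ⊆ s ∧ t.card = m ∧ AlgebraicIndepOn F id (t : Set A)}
  have hbdd : BddAbove cards :=
    ⟨s.card, by rintro _ ⟨t, hts, rfl, -⟩; exact Finset.card_le_card hts⟩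
  have hempty : AlgebraicIndepOn F id ((∅ : Finset A) : Set A) := by
    rw [Finset.coe_empty]
    exact algebraicIndependent_empty_type_iff.mpr (FaithfulSMul.algebraMap_injective F A)
  obtain ⟨t, hts, hcard, ht⟩ : fintrdeg F s ∈ cards :=
    Nat.sSup_mem ⟨_, ∅, s.empty_subset, rfl, hempty⟩ hbdd
  refine ⟨t, hts, hcard, ht, fun a ha => ?_⟩
  by_contra htr
  have hat : a ∉ t := fun hat =>
    htr (isAlgebraic_algebraMap (⟨a, Algebra.subset_adjoin hat⟩ : Algebra.adjoin F (t : Set A)))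
  have hinsert : AlgebraicIndepOn F id (insert a t : Set A) :=
    ht.insert (by rwa [Set.image_id])
  have hle : (insert a t).card ≤ t.card := hcard ▸ le_csSup hbdd
    ⟨insert a t, Finset.insert_subset ha hts, rfl, by rwa [Finset.coe_insert]⟩
  rw [Finset.card_insert_of_notMem hat] at hle
  omega

theorem exists_isTranscendenceBasis_image_eq_of_totalDegree_eq_one_of_notMem
    {F σ : Type*} [CommRing F] [IsDomain F] {t : Set (MvPolynomial σ F)}
    (ht : AlgebraicIndepOn F id t) :
    ∃ (y : σ → MvPolynomial σ F) (T : Set σ), IsTranscendenceBasis F y ∧ y '' T = t ∧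
      ∀ i ∉ T, (y i).totalDegree = 1 := by
  have : Algebra.IsAlgebraic (Algebra.adjoin F (t ∪ Set.range X)) (MvPolynomial σ F) :=
    ⟨fun g => isAlgebraic_algebraMap (⟨g, Algebra.adjoin_mono Set.subset_union_right
      (adjoin_range_X (R := F) (σ := σ) ▸ Algebra.mem_top)⟩ : Algebra.adjoin F (t ∪ Set.range X))⟩
  obtain ⟨u, htu, hut, hu⟩ :=
    exists_isTranscendenceBasis_between t (t ∪ Set.range X) Set.subset_union_left ht
  obtain ⟨e⟩ : Nonempty (σ ≃ u) :=
    Cardinal.lift_mk_eq'.mp ((IsTranscendenceBasis.mvPolynomial σ F).lift_cardinalMk_eq hu)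
  refine ⟨fun i => e i, {i | (e i : MvPolynomial σ F) ∈ t}, (isTranscendenceBasis_equiv e).mpr hu,
    ?_, fun i hi => ?_⟩
  · ext g
    exact ⟨by rintro ⟨i, hi, rfl⟩; exact hi, fun hg => ⟨e.symm ⟨g, htu hg⟩, by simp [hg]⟩⟩
  · obtain ⟨j, hj⟩ := (hut (e i).2).resolve_left hi
    beta_reduce
    rw [← hj, totalDegree_X]

end TranscendenceDegree

section Jacobian

/-- The Jacobian matrix `(∂fᵢ/∂xⱼ)` of a family of polynomials, with entries in an algebra `E`
over the polynomial ring, such as its field of fractions. -/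
noncomputable def jacobianMatrix {F σ ι : Type*} (E : Type*) [CommSemiring F] [CommSemiring E]
    [Algebra (MvPolynomial σ F) E] (f : ι → MvPolynomial σ F) : Matrix ι σ E :=
  Matrix.of fun i j => algebraMap (MvPolynomial σ F) E (pderiv j (f i))

section CommSemiring

variable {F E σ ι : Type*} [CommSemiring F] [CommSemiring E] [Fintype σ] [Algebra F E]
  [Algebra (MvPolynomial σ F) E] [IsScalarTower F (MvPolynomial σ F) E]

theorem mkDerivation_apply_eq_sum_pderiv_mul (v : σ → E) (g : MvPolynomial σ F) :
    mkDerivation F v g = ∑ j, algebraMap (MvPolynomial σ F) E (pderiv j g) * v j := by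
  have hsum : mkDerivation F v =
      ∑ j, (LinearMap.toSpanSingleton (MvPolynomial σ F) E (v j)).compDer (pderiv j) := by
    refine derivation_ext fun i => ?_
    rw [mkDerivation_X, ← Derivation.coeFnAddMonoidHom_apply, map_sum, Finset.sum_apply]
    simp [pderiv_X, Pi.single_apply, ite_smul]
  rw [hsum, ← Derivation.coeFnAddMonoidHom_apply, map_sum, Finset.sum_apply]
  simp [Algebra.smul_def]

theorem jacobianMatrix_mulVec_apply (f : ι → MvPolynomial σ F) (v : σ → E) (i : ι) :
    (jacobianMatrix E f).mulVec v i = mkDerivation F v (f i) :=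
  (mkDerivation_apply_eq_sum_pderiv_mul v (f i)).symm

end CommSemiring

section Field

theorem rank_eq_rank_of_forall_mulVec_eq_zero_iff {K m m' n : Type*} [Field K] [Fintype n]
    {A : Matrix m n K} {B : Matrix m' n K} (h : ∀ v, A.mulVec v = 0 ↔ B.mulVec v = 0) :
    A.rank = B.rank := by
  have hker : LinearMap.ker A.mulVecLin = LinearMap.ker B.mulVecLin := by
    ext v
    exact h v
  have hA := A.mulVecLin.finrank_range_add_finrank_ker
  have hB := B.mulVecLin.finrank_range_add_finrank_ker
  rw [hker] at hA
  exact Nat.add_right_cancel (hA.trans hB.symm)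

variable {F E σ ι : Type*} [Field F] [Field E] [Fintype σ] [Algebra F E]
  [Algebra (MvPolynomial σ F) E] [IsScalarTower F (MvPolynomial σ F) E]
  [FaithfulSMul (MvPolynomial σ F) E] {y : σ → MvPolynomial σ F}

theorem isUnit_jacobianMatrix (hy : IsTranscendenceBasis F y)
    (hchar : ringChar F = 0 ∨ ∏ i, (y i).totalDegree < ringChar F) :
    IsUnit (jacobianMatrix E y) := by
  rw [← Matrix.mulVec_injective_iff_isUnit]
  refine (injective_iff_map_eq_zero (jacobianMatrix E y).mulVecLin).mpr fun v hv => ?_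
  ext j
  have hDy (i : σ) : mkDerivation F v (y i) = 0 := by
    rw [← jacobianMatrix_mulVec_apply]
    exact congrFun hv i
  have hX : IsAlgebraic (Algebra.adjoin F (y '' Set.univ)) (X j : MvPolynomial σ F) := by
    rw [Set.image_univ]
    exact hy.isAlgebraic.isAlgebraic _
  rw [Pi.zero_apply, ← mkDerivation_X F v j]
  exact derivation_eq_zero_of_isAlgebraic_adjoin_image hy.1 hchar (fun i _ => hDy i) hX

theorem rank_jacobianMatrix_comp_coe (hy : IsTranscendenceBasis F y)
    (hchar : ringChar F = 0 ∨ ∏ i, (y i).totalDegree < ringChar F) (T : Set σ) :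
    (jacobianMatrix E fun i : T => y i).rank = T.ncard := by
  have hrows : LinearIndependent E (jacobianMatrix E y).row :=
    Matrix.linearIndependent_rows_iff_isUnit.mpr (isUnit_jacobianMatrix hy hchar)
  have hrowsT : LinearIndependent E (jacobianMatrix E fun i : T => y i).row :=
    hrows.comp Subtype.val Subtype.val_injective
  rw [hrowsT.rank_matrix, ← Nat.card_eq_fintype_card, Nat.card_coe_set_eq]

theorem rank_jacobianMatrix_eq_ncard (hy : IsTranscendenceBasis F y)
    (hchar : ringChar F = 0 ∨ ∏ i, (y i).totalDegree < ringChar F) {T : Set σ}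
    {f : ι → MvPolynomial σ F} (hTf : y '' T ⊆ Set.range f)
    (hf : ∀ k, IsAlgebraic (Algebra.adjoin F (y '' T)) (f k)) :
    (jacobianMatrix E f).rank = T.ncard := by
  rw [← rank_jacobianMatrix_comp_coe (E := E) hy hchar T]
  refine rank_eq_rank_of_forall_mulVec_eq_zero_iff fun v => ?_
  simp only [funext_iff, jacobianMatrix_mulVec_apply, Pi.zero_apply]
  constructor
  · rintro hDf ⟨i, hi⟩
    obtain ⟨k, hk⟩ := hTf (Set.mem_image_of_mem y hi)
    exact hk ▸ hDf k
  · intro hDy k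
    exact derivation_eq_zero_of_isAlgebraic_adjoin_image hy.1 hchar (fun i hi => hDy ⟨i, hi⟩) (hf k)

end Field

end Jacobian

section Criterion

theorem pow_lt_ringChar_of_le {F : Type*} [NonAssocRing F] [Nontrivial F] {d k r : ℕ}
    (hkr : k ≤ r) (hchar : d ^ r < ringChar F) : d ^ k < ringChar F := by
  rcases d.eq_zero_or_pos with rfl | hd
  · have hne_one : ringChar F ≠ 1 := CharP.ringChar_ne_one
    have hpos : 0 < ringChar F := hchar.pos
    have hle_one : 0 ^ k ≤ 1 := pow_le_one₀ le_rfl zero_le_one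
    omega
  · exact (Nat.pow_le_pow_right hd hkr).trans_lt hchar

theorem prod_le_pow_ncard {σ : Type*} [Fintype σ] {w : σ → ℕ} {T : Set σ} {d : ℕ}
    (hT : ∀ i ∈ T, w i ≤ d) (hTc : ∀ i ∉ T, w i = 1) : ∏ i, w i ≤ d ^ T.ncard :=
  calc ∏ i, w i = ∏ i ∈ T.toFinset, w i :=
        (Finset.prod_subset (Finset.subset_univ _) fun i _ hi => hTc i (by simpa using hi)).symm
    _ ≤ ∏ _i ∈ T.toFinset, d := Finset.prod_le_prod' fun i hi => hT i (by simpa using hi)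
    _ = d ^ T.ncard := by rw [Finset.prod_const, Set.ncard_eq_toFinset_card']

theorem jacobian_criterion_general {F E σ ι : Type*} [Field F] [Field E] [Fintype σ] [Fintype ι]
    [DecidableEq (MvPolynomial σ F)] [Algebra F E] [Algebra (MvPolynomial σ F) E]
    [IsScalarTower F (MvPolynomial σ F) E] [FaithfulSMul (MvPolynomial σ F) E] {d r : ℕ}
    {f : ι → MvPolynomial σ F} (hdeg : ∀ i, (f i).totalDegree ≤ d)
    (htr : fintrdeg F (Finset.image f Finset.univ) ≤ r)
    (hchar : ringChar F = 0 ∨ d ^ r < ringChar F) :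
    fintrdeg F (Finset.image f Finset.univ) = (jacobianMatrix E f).rank := by
  obtain ⟨t, hts, hcard, ht, halg⟩ :=
    exists_algebraicIndepOn_card_eq_fintrdeg (F := F) (Finset.image f Finset.univ)
  obtain ⟨y, T, hy, hTt, hTc⟩ :=
    exists_isTranscendenceBasis_image_eq_of_totalDegree_eq_one_of_notMem ht
  have hTf : y '' T ⊆ Set.range f := by
    simpa [hTt, ← Finset.coe_subset] using hts
  have hT : T.ncard = fintrdeg F (Finset.image f Finset.univ) := by
    rw [← hcard, ← Set.ncard_coe_finset, ← hTt, Set.ncard_image_of_injective T hy.1.injective]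
  have hdegT : ∀ g ∈ y '' T, g.totalDegree ≤ d := fun g hg => by
    obtain ⟨k, rfl⟩ := hTf hg
    exact hdeg k
  have hprod : ∏ i, (y i).totalDegree ≤ d ^ T.ncard :=
    prod_le_pow_ncard (fun i hi => hdegT (y i) ⟨i, hi, rfl⟩) hTc
  rw [← hT] at htr ⊢
  have hcharT := hchar.imp_right fun hlt => hprod.trans_lt (pow_lt_ringChar_of_le htr hlt)
  refine (rank_jacobianMatrix_eq_ncard hy hcharT hTf fun k => ?_).symm
  rw [hTt]
  exact halg _ (Finset.mem_image_of_mem f (Finset.mem_univ k))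

end Criterion

/-- Jacobian criterion for algebraic independence: if `f₁,…,f_m ∈ F[x₁,…,xₙ]`
have total degree at most `d` and transcendence degree at most `r`, and
`char F = 0` or `char F > d^r`, then the transcendence degree of `{f₁,…,f_m}`
equals the rank, over the rational function field `F(x₁,…,xₙ)`, of the Jacobian
matrix `(∂fᵢ/∂xⱼ)`. -/
theorem jacobian_criterion (F : Type*) [Field F] (n m d r : ℕ)
    (f : Fin m → MvPolynomial (Fin n) F)
    (hdeg : ∀ i, (f i).totalDegree ≤ d)
    (htr : fintrdeg F (Finset.image f Finset.univ) ≤ r)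
    (hchar : ringChar F = 0 ∨ d ^ r < ringChar F) :
    fintrdeg F (Finset.image f Finset.univ) =
      Matrix.rank (Matrix.of fun (i : Fin m) (j : Fin n) =>
        algebraMap (MvPolynomial (Fin n) F) (FractionRing (MvPolynomial (Fin n) F))
          (MvPolynomial.pderiv j (f i))) :=
  jacobian_criterion_general hdeg htr hchar
end

section
/- Splitting a power of a sum of powers of linear forms into a depth-3 expression: Let F be an algebraically closed field of characteristic zero, let ℓ_1,…,ℓ_s ∈ F[x_1,…,x_n] be polynomials of degree at most 1, let e_1,…,e_s ≥ 1 be integers, and let a ≥ 1. Then there exist, for 1 ≤ u ≤ sa+1, constants c_u ∈ F and polynomials L_{u,1},…,L_{u,d_u} ∈ F[x_1,…,x_n] of degree at most 1 with d_u ≤ a·(e_1 + ⋯ + e_s), such that (ℓ_1^{e_1} + ℓ_2^{e_2} + ⋯ + ℓ_s^{e_s})^a = Σ_{u=1}^{sa+1} c_u · Π_{v=1}^{d_u} L_{u,v}. -/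
/-!
If `E` is the exponential series truncated after degree `a`, then `(y₁ + ⋯ + y_s) ^ a / a!` is the
coefficient of `T ^ a` in `∏ j, E (y_j T)`: truncation does not affect the coefficients up to `a`,
and `exp` turns sums into products. This product has degree at most `s * a` in `T`, so Lagrange
interpolation at `s * a + 1` scalars `t_u` writes that coefficient as a fixed linear combination of
the values `∏ j, E (t_u y_j)`. For `y_j = ℓ_j ^ e_j` the factor `E (t_u ℓ_j ^ e_j)` is a univariate
polynomial of degree at most `a * e_j` evaluated at `ℓ_j`, and splits into factors `ℓ_j - r`.
-/

open Polynomial Finset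
open scoped Nat

section Interpolation

variable {F R ι : Type*} [Field F] [CommSemiring R] [Algebra F R] [DecidableEq ι]
  {s : Finset ι} {v : ι → F}

theorem sum_coeff_lagrangeBasis_mul_pow (hvs : Set.InjOn v s) {k : ℕ} (hk : k < #s) (m : ℕ) :
    ∑ i ∈ s, (Lagrange.basis s v i).coeff m * v i ^ k = if m = k then 1 else 0 := by
  have interpolate_X_pow := Lagrange.eq_interpolate (f := X ^ k) hvs (by simpa using hk)
  have coeff_X_pow_eq := congrArg (coeff · m) interpolate_X_pow
  simp_rw [mul_comm _ (v _ ^ k)]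
  simpa only [Lagrange.interpolate_apply, finsetSum_coeff, coeff_C_mul, eval_X_pow, coeff_X_pow]
    using coeff_X_pow_eq.symm

theorem coeff_eq_sum_coeff_lagrangeBasis_smul_eval (hvs : Set.InjOn v s) {P : R[X]}
    (hP : P.natDegree < #s) (m : ℕ) :
    P.coeff m = ∑ i ∈ s, (Lagrange.basis s v i).coeff m • P.eval (algebraMap F R (v i)) := by
  symm
  calc
    ∑ i ∈ s, (Lagrange.basis s v i).coeff m • P.eval (algebraMap F R (v i))
      = ∑ k ∈ range #s, (∑ i ∈ s, (Lagrange.basis s v i).coeff m * v i ^ k) • P.coeff k := by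
        simp_rw [eval_eq_sum_range' hP, smul_sum, sum_smul]
        rw [sum_comm]
        simp_rw [← map_pow, mul_comm (P.coeff _), ← Algebra.smul_def, smul_smul]
    _ = ∑ k ∈ range #s, if m = k then P.coeff k else 0 := by
        refine sum_congr rfl fun k hk => ?_
        rw [sum_coeff_lagrangeBasis_mul_pow hvs (mem_range.mp hk), ite_smul, one_smul, zero_smul]
    _ = P.coeff m := by
        rw [sum_ite_eq, ite_eq_left_iff, mem_range, not_lt]
        exact fun hm => (coeff_eq_zero_of_natDegree_lt (hP.trans_le hm)).symm

end Interpolation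

section TruncatedExponential

/-- The exponential series truncated after degree `a`, that is `∑ k ≤ a, X ^ k / k!`. It is a
polynomial over any field; `1 / k!` is the junk value `0` when the characteristic divides `k!`. -/
noncomputable def truncExp (F : Type*) [Field F] (a : ℕ) : F[X] :=
  ∑ k ∈ range (a + 1), monomial k (k ! : F)⁻¹

variable {F R ι : Type*} [Field F] [CommSemiring R] [Algebra F R]

theorem coeff_truncExp {a k : ℕ} (hk : k ≤ a) : (truncExp F a).coeff k = (k ! : F)⁻¹ := by
  simp [truncExp, finsetSum_coeff, coeff_monomial, Nat.lt_succ_of_le hk]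

theorem natDegree_truncExp_le (a : ℕ) : (truncExp F a).natDegree ≤ a :=
  natDegree_sum_le_of_forall_le _ _ fun _ hk =>
    (natDegree_monomial_le _).trans (Nat.lt_succ_iff.mp (mem_range.mp hk))

theorem inv_factorial_smul_add_pow {k : ℕ} (hk : (k ! : F) ≠ 0) (x y : R) :
    (k ! : F)⁻¹ • (x + y) ^ k =
      ∑ p ∈ antidiagonal k, ((p.1 ! : F)⁻¹ • x ^ p.1) * ((p.2 ! : F)⁻¹ • y ^ p.2) := by
  rw [(Commute.all x y).add_pow', smul_sum]
  refine sum_congr rfl fun p hp => ?_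
  have choose_eq : (k.choose p.1 : F) = k ! * (p.1 ! : F)⁻¹ * (p.2 ! : F)⁻¹ := by
    simpa only [Ring.inverse_eq_inv'] using Nat.castChoose_eq (isUnit_iff_ne_zero.mpr hk) hp
  rw [← Nat.cast_smul_eq_nsmul F, smul_smul, smul_mul_smul_comm, choose_eq, mul_assoc,
    inv_mul_cancel_left₀ hk]

variable (F) in
/-- The polynomial `E (y T)` in `T`, where `E` is `truncExp F a` and `y` lies in an `F`-algebra. -/
noncomputable def scaledTruncExp (a : ℕ) (y : R) : R[X] :=
  ((truncExp F a).map (algebraMap F R)).comp (C y * X)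

theorem coeff_scaledTruncExp {a k : ℕ} (hk : k ≤ a) (y : R) :
    (scaledTruncExp F a y).coeff k = (k ! : F)⁻¹ • y ^ k := by
  rw [scaledTruncExp, comp_C_mul_X_coeff, coeff_map, coeff_truncExp hk, Algebra.smul_def]

theorem natDegree_scaledTruncExp_le (a : ℕ) (y : R) : (scaledTruncExp F a y).natDegree ≤ a :=
  calc
    (scaledTruncExp F a y).natDegree
      ≤ ((truncExp F a).map (algebraMap F R)).natDegree * (C y * X).natDegree := natDegree_comp_le
    _ ≤ a * 1 := Nat.mul_le_mul (natDegree_map_le.trans (natDegree_truncExp_le a))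
        ((natDegree_C_mul_le y X).trans natDegree_X_le)
    _ = a := mul_one a

theorem eval_algebraMap_scaledTruncExp (a : ℕ) (y : R) (t : F) :
    (scaledTruncExp F a y).eval (algebraMap F R t) = aeval (t • y) (truncExp F a) := by
  rw [scaledTruncExp, eval_comp, eval_map_algebraMap, eval_mul, eval_C, eval_X, mul_comm,
    Algebra.smul_def]

theorem natDegree_prod_scaledTruncExp_le (a : ℕ) (s : Finset ι) (y : ι → R) :
    (∏ i ∈ s, scaledTruncExp F a (y i)).natDegree ≤ #s * a :=
  (natDegree_prod_le _ _).trans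
    (sum_le_card_nsmul _ _ a fun i _ => natDegree_scaledTruncExp_le a (y i))

theorem coeff_prod_scaledTruncExp {a k : ℕ} (ha : (a ! : F) ≠ 0) (hk : k ≤ a) (s : Finset ι)
    (y : ι → R) :
    (∏ i ∈ s, scaledTruncExp F a (y i)).coeff k = (k ! : F)⁻¹ • (∑ i ∈ s, y i) ^ k := by
  classical
  induction s using Finset.induction_on generalizing k with
  | empty => cases k <;> simp [coeff_one]
  | insert i s hi ih =>
    have hk_ne_zero : (k ! : F) ≠ 0 :=
      ((isUnit_iff_ne_zero.mpr ha).natCast_factorial_of_le hk).ne_zero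
    rw [prod_insert hi, sum_insert hi, coeff_mul, inv_factorial_smul_add_pow hk_ne_zero]
    refine sum_congr rfl fun p hp => ?_
    rw [coeff_scaledTruncExp ((HasAntidiagonal.antidiagonal.fst_le hp).trans hk),
      ih ((HasAntidiagonal.antidiagonal.snd_le hp).trans hk)]

theorem sum_pow_eq_sum_smul_prod_aeval_truncExp {κ : Type*} [Fintype ι] [Fintype κ]
    [DecidableEq κ] {a : ℕ} (ha : (a ! : F) ≠ 0) (t : κ ↪ F)
    (hκ : Fintype.card ι * a < Fintype.card κ) (y : ι → R) :
    (∑ i, y i) ^ a = ∑ u, ((a ! : F) * (Lagrange.basis univ t u).coeff a) •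
      ∏ i, aeval (t u • y i) (truncExp F a) := by
  have natDegree_lt : (∏ i, scaledTruncExp F a (y i)).natDegree < #(univ : Finset κ) :=
    (natDegree_prod_scaledTruncExp_le a univ y).trans_lt hκ
  calc
    (∑ i, y i) ^ a = (a ! : F) • (∏ i, scaledTruncExp F a (y i)).coeff a := by
      rw [coeff_prod_scaledTruncExp ha le_rfl, smul_inv_smul₀ ha]
    _ = _ := by
      rw [coeff_eq_sum_coeff_lagrangeBasis_smul_eval t.injective.injOn natDegree_lt, smul_sum]
      simp_rw [smul_smul, eval_prod, eval_algebraMap_scaledTruncExp]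

end TruncatedExponential

section LinearFactors

variable {F R ι : Type*} [Field F] [CommRing R] [Algebra F R]

theorem aeval_eq_leadingCoeff_smul_prod_roots {p : F[X]} (hp : p.Splits) (x : R) :
    aeval x p = p.leadingCoeff • (p.roots.map fun r => x - algebraMap F R r).prod := by
  conv_lhs => rw [hp.eq_prod_roots]
  simp [map_multiset_prod, Multiset.map_map, Algebra.smul_def]

theorem exists_fin_prod_eq_multiset_prod {M : Type*} [CommMonoid M] (S : Multiset M) :
    ∃ f : Fin S.card → M, (∀ v, f v ∈ S) ∧ ∏ v, f v = S.prod := by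
  induction S using Quotient.inductionOn with
  | _ l => exact ⟨l.get, l.get_mem, Fin.prod_univ_getElem l⟩

theorem exists_prod_aeval_eq_smul_prod [Fintype ι] {V : Submodule F R} (one_mem : 1 ∈ V)
    {x : ι → R} (hx : ∀ i, x i ∈ V) {p : ι → F[X]} (hp : ∀ i, (p i).Splits) :
    ∃ (d : ℕ) (c : F) (L : Fin d → R), d ≤ ∑ i, (p i).natDegree ∧ (∀ v, L v ∈ V) ∧
      ∏ i, aeval (x i) (p i) = c • ∏ v, L v := by
  let factors : Multiset R := ∑ i, (p i).roots.map fun r => x i - algebraMap F R r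
  have mem_of_mem_factors : ∀ q ∈ factors, q ∈ V := by
    intro q hq
    obtain ⟨i, -, hqi⟩ := Multiset.mem_sum.mp hq
    obtain ⟨r, -, rfl⟩ := Multiset.mem_map.mp hqi
    rw [Algebra.algebraMap_eq_smul_one]
    exact V.sub_mem (hx i) (V.smul_mem r one_mem)
  obtain ⟨L, hL, prod_L⟩ := exists_fin_prod_eq_multiset_prod factors
  refine ⟨_, ∏ i, (p i).leadingCoeff, L, ?_, fun v => mem_of_mem_factors _ (hL v), ?_⟩
  · rw [Multiset.card_sum]
    exact sum_le_sum fun i _ => (Multiset.card_map _ _).trans_le (p i).card_roots'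
  · rw [prod_L, Multiset.prod_sum, ← prod_smul]
    exact prod_congr rfl fun i _ => aeval_eq_leadingCoeff_smul_prod_roots (hp i) (x i)

end LinearFactors

/-- `V` plays the role of the polynomials of degree at most one, and `κ` indexes the `s * a + 1`
summands. -/
theorem power_sum_to_depth3_general {F R ι κ : Type*} [Field F] [IsAlgClosed F] [CommRing R]
    [Algebra F R] [Fintype ι] [Fintype κ] {a : ℕ} (ha : (a ! : F) ≠ 0)
    (hκ : Fintype.card ι * a < Fintype.card κ) {V : Submodule F R} (one_mem : 1 ∈ V)
    {ℓ : ι → R} (hℓ : ∀ i, ℓ i ∈ V) (e : ι → ℕ) :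
    ∃ (d : κ → ℕ) (c : κ → F) (L : (u : κ) → Fin (d u) → R),
      (∀ u, d u ≤ a * ∑ i, e i) ∧ (∀ u v, L u v ∈ V) ∧
      (∑ i, ℓ i ^ e i) ^ a = ∑ u, c u • ∏ v, L u v := by
  classical
  obtain ⟨t⟩ : Nonempty (κ ↪ F) :=
    ⟨(Fintype.equivFin κ).toEmbedding.trans (Fin.valEmbedding.trans (Infinite.natEmbedding F))⟩
  let p (u : κ) (i : ι) : F[X] := (truncExp F a).comp (C (t u) * X ^ e i)
  have natDegree_p_le (u : κ) (i : ι) : (p u i).natDegree ≤ a * e i :=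
    natDegree_comp_le.trans
      (Nat.mul_le_mul (natDegree_truncExp_le a) (natDegree_C_mul_X_pow_le _ _))
  have aeval_p (u : κ) (i : ι) :
      aeval (ℓ i) (p u i) = aeval (t u • ℓ i ^ e i) (truncExp F a) := by
    simp [p, aeval_comp, Algebra.smul_def]
  choose d c L hd hL prod_aeval using fun u =>
    exists_prod_aeval_eq_smul_prod one_mem hℓ fun i => IsAlgClosed.splits (p u i)
  refine ⟨d, fun u => (a ! * (Lagrange.basis univ t u).coeff a) * c u, L, fun u => ?_, hL, ?_⟩
  · rw [mul_sum]
    exact (hd u).trans (sum_le_sum fun i _ => natDegree_p_le u i)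
  · rw [sum_pow_eq_sum_smul_prod_aeval_truncExp ha t hκ]
    simp_rw [← aeval_p, prod_aeval, smul_smul]

/-- Splitting a power of a sum of powers of linear forms into a depth-3
expression: over an algebraically closed field of characteristic zero, for
polynomials `ℓ₁,…,ℓ_s` of degree at most 1, exponents `eᵢ ≥ 1` and `a ≥ 1`,
there exist, for `1 ≤ u ≤ sa+1`, constants `c_u ∈ F` and degree-≤1 polynomials
`L_{u,1},…,L_{u,d_u}` with `d_u ≤ a·(e₁+⋯+e_s)`, such that
`(ℓ₁^{e₁} + ⋯ + ℓ_s^{e_s})^a = Σ_{u=1}^{sa+1} c_u Π_{v=1}^{d_u} L_{u,v}`. -/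
theorem power_sum_to_depth3 (F : Type*) [Field F] [IsAlgClosed F] [CharZero F]
    (n s a : ℕ) (hs : 1 ≤ s) (ha : 1 ≤ a)
    (ℓ : Fin s → MvPolynomial (Fin n) F) (hdeg : ∀ i, (ℓ i).totalDegree ≤ 1)
    (e : Fin s → ℕ) (he : ∀ i, 1 ≤ e i) :
    ∃ (d : Fin (s * a + 1) → ℕ) (c : Fin (s * a + 1) → F)
      (L : (u : Fin (s * a + 1)) → Fin (d u) → MvPolynomial (Fin n) F),
      (∀ u, d u ≤ a * ∑ i, e i) ∧
      (∀ u v, (L u v).totalDegree ≤ 1) ∧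
      (∑ i : Fin s, ℓ i ^ e i) ^ a =
        ∑ u : Fin (s * a + 1), MvPolynomial.C (c u) * ∏ v : Fin (d u), L u v := by
  simp_rw [MvPolynomial.C_mul', ← MvPolynomial.mem_restrictTotalDegree] at hdeg ⊢
  exact power_sum_to_depth3_general (Nat.cast_ne_zero.mpr a.factorial_ne_zero) (by simp)
    ((MvPolynomial.mem_restrictTotalDegree _ _ _).mpr (by simp)) hdeg e
end
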